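/- Let S = {0,1,2,3} ⊆ Z/7Z. The R-palette graph G_S contains no connected R-subgraph with at least three vertices. -/

import Mathlib

/-- Adjacency in the R-palette graph `G_S` of a subset `S ⊆ ZMod p`. -/
def RAdj (p : ℕ) (S : Set (ZMod p)) (b₁ b₂ : ZMod p) : Prop :=
  b₁ ≠ b₂ ∧ ∃ a₁ ∈ S, ∃ a₂ ∈ S, ∃ a₃ ∈ S, ∃ a₄ ∈ S,
    a₁ + a₂ = b₁ ∧ a₃ + a₄ = b₂ ∧ (a₁ + a₃ = a₂ + a₄ ∨ a₁ + a₄ = a₂ + a₃)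

/-- `(V, E)` is a connected R-subgraph of the R-palette graph `G_S`:
vertices are sums of two elements of `S`, edges are edges of `G_S` between
vertices of `V` whose label `2⁻¹(b₁+b₂)` is again a vertex of `V`, and any two
vertices of `V` are joined by a path of edges of `E`. -/
def IsConnectedRSubgraph (p : ℕ) (S : Set (ZMod p)) (V : Set (ZMod p))
    (E : ZMod p → ZMod p → Prop) : Prop :=
  (∀ b ∈ V, ∃ a ∈ S, ∃ a' ∈ S, a + a' = b) ∧
  (∀ b₁ b₂, E b₁ b₂ → E b₂ b₁) ∧
  (∀ b₁ b₂, E b₁ b₂ →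
    b₁ ∈ V ∧ b₂ ∈ V ∧ RAdj p S b₁ b₂ ∧ (2 : ZMod p)⁻¹ * (b₁ + b₂) ∈ V) ∧
  (∀ b ∈ V, ∀ b' ∈ V, Relation.ReflTransGen E b b')

/-!
Represent residues by integers in `[0, p)`. When all elements of `S` lie below `p / 2`, sums of two
elements of `S` do not wrap around, so adjacent vertices have the same parity and the label of an
edge is the integer midpoint of its ends. If all vertices of a connected R-subgraph agree modulo
`n`, then each midpoint agrees with its ends modulo `n`, so the ends agree modulo `2 * n`, and by
connectedness so do all vertices. Hence the vertices agree modulo every power of two, so there is at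
most one of them.
-/

section

variable {p : ℕ} {S V : Set (ZMod p)} {E : ZMod p → ZMod p → Prop} {b₁ b₂ : ZMod p}

theorem RAdj.val_modEq_two (hS : ∀ a ∈ S, 2 * a.val < p) (h : RAdj p S b₁ b₂) :
    b₁.val ≡ b₂.val [MOD 2] := by
  have val_add {a a' : ZMod p} (ha : a ∈ S) (ha' : a' ∈ S) : (a + a').val = a.val + a'.val :=
    ZMod.val_add_of_lt (by linarith [hS a ha, hS a' ha'])
  obtain ⟨-, a₁, h₁, a₂, h₂, a₃, h₃, a₄, h₄, rfl, rfl, h⟩ := h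
  have val_eq : a₁.val + a₃.val = a₂.val + a₄.val ∨ a₁.val + a₄.val = a₂.val + a₃.val :=
    h.imp (fun h ↦ by rw [← val_add h₁ h₃, h, val_add h₂ h₄])
      (fun h ↦ by rw [← val_add h₁ h₄, h, val_add h₂ h₃])
  rw [val_add h₁ h₂, val_add h₃ h₄, Nat.ModEq]
  lia

theorem two_mul_val_inv_two_mul_add (hp : Odd p) (h : b₁.val ≡ b₂.val [MOD 2]) :
    2 * ((2 : ZMod p)⁻¹ * (b₁ + b₂)).val = b₁.val + b₂.val := by
  have : NeZero p := ⟨hp.pos.ne'⟩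
  obtain ⟨m, hm⟩ : 2 ∣ b₁.val + b₂.val := by
    rw [Nat.ModEq] at h
    lia
  have m_lt : m < p := by linarith [b₁.val_lt, b₂.val_lt]
  have label_eq : (2 : ZMod p)⁻¹ * (b₁ + b₂) = m := by
    have two_inv_mul_two : (2 : ZMod p)⁻¹ * 2 = 1 :=
      ZMod.inv_mul_of_unit 2 ((ZMod.isUnit_iff_coprime 2 p).mpr hp.coprime_two_left)
    calc (2 : ZMod p)⁻¹ * (b₁ + b₂) = 2⁻¹ * ((b₁.val + b₂.val : ℕ) : ZMod p) := by
          rw [Nat.cast_add, ZMod.natCast_zmod_val, ZMod.natCast_zmod_val]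
      _ = 2⁻¹ * 2 * m := by rw [hm, Nat.cast_mul, Nat.cast_ofNat, mul_assoc]
      _ = m := by rw [two_inv_mul_two, one_mul]
  rw [label_eq, ZMod.val_natCast_of_lt m_lt, hm]

theorem modEq_two_mul_of_midpoint_modEq {m n x y : ℕ} (hm : 2 * m = x + y)
    (h : m ≡ x [MOD n]) : x ≡ y [MOD 2 * n] := by
  have : x + y ≡ x + x [MOD 2 * n] := by
    rw [← hm, ← two_mul]
    exact h.mul_left' 2
  exact (Nat.ModEq.add_left_cancel' x this).symm

namespace IsConnectedRSubgraph

theorem map_eq_of_forall_edge {α : Type*} (hG : IsConnectedRSubgraph p S V E) (f : ZMod p → α)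
    (hf : ∀ x y, E x y → f x = f y) (h₁ : b₁ ∈ V) (h₂ : b₂ ∈ V) : f b₁ = f b₂ := by
  obtain ⟨-, -, -, connected⟩ := hG
  exact Relation.reflTransGen_le_of_equivalence_of_le (eq_equivalence.comap f) hf _ _
    (connected b₁ h₁ b₂ h₂)

theorem val_modEq_two_pow (hG : IsConnectedRSubgraph p S V E) (hp : Odd p)
    (hS : ∀ a ∈ S, 2 * a.val < p) (k : ℕ) (h₁ : b₁ ∈ V) (h₂ : b₂ ∈ V) :
    b₁.val ≡ b₂.val [MOD 2 ^ k] := by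
  induction k generalizing b₁ b₂ with
  | zero => exact Nat.modEq_one
  | succ k ih =>
    refine hG.map_eq_of_forall_edge (·.val % 2 ^ (k + 1)) (fun x y edge ↦ ?_) h₁ h₂
    obtain ⟨-, -, edge_spec, -⟩ := hG
    obtain ⟨hx, -, adj, label_mem⟩ := edge_spec x y edge
    change x.val ≡ y.val [MOD 2 ^ (k + 1)]
    rw [pow_succ']
    exact modEq_two_mul_of_midpoint_modEq
      (two_mul_val_inv_two_mul_add hp (adj.val_modEq_two hS)) (ih label_mem hx)

end IsConnectedRSubgraph

theorem stmt12_general (hp : Odd p) (hS : ∀ a ∈ S, 2 * a.val < p)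
    (hG : IsConnectedRSubgraph p S V E) : V.Subsingleton := by
  intro b₁ h₁ b₂ h₂
  have : NeZero p := ⟨hp.pos.ne'⟩
  have val_lt_two_pow (b : ZMod p) : b.val < 2 ^ p := b.val_lt.trans Nat.lt_two_pow_self
  exact ZMod.val_injective p <|
    (hG.val_modEq_two_pow hp hS p h₁ h₂).eq_of_lt_of_lt (val_lt_two_pow b₁) (val_lt_two_pow b₂)

end

theorem stmt12 :
    ¬ ∃ (V : Set (ZMod 7)) (E : ZMod 7 → ZMod 7 → Prop),
      IsConnectedRSubgraph 7 ({0, 1, 2, 3} : Set (ZMod 7)) V E ∧ 3 ≤ V.ncard := by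
  rintro ⟨V, E, hG, three_le⟩
  have hS : ∀ a ∈ ({0, 1, 2, 3} : Set (ZMod 7)), 2 * a.val < 7 := by
    rintro a (rfl | rfl | rfl | rfl) <;> decide
  have hV : V.Subsingleton := stmt12_general (by decide) hS hG
  linarith [Set.ncard_le_one_iff_subsingleton.mpr hV]
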